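/- Let λ > 0, let ψ ∈ P^r satisfy Γ_λ(ψ) = L(1), and define e(t) = exp(−λ(t−t₀)) − ψ(t). Then for all w, v ∈ P^r with Γ_λ(v) = w, the L∞–L¹ stability estimate sup_{t∈I} |v(t)| ≤ (sup_{t∈I} |e(t)/e(t₀)| + 1) · ∫_I |w(t)| dt holds. -/

import Mathlib

open Polynomial MeasureTheory intervalIntegral

/-- The rescaled Legendre polynomials on `[t₀, t₁]`: `K i` has degree `i`,
`K i (t₁) = 1`, `K i (t₀) = (-1)^i`, and they are `L²(t₀,t₁)`-orthogonal with
`∫ K i ^ 2 = (t₁ - t₀)/(2 i + 1)`. -/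
def IsLegendreBasis (t₀ t₁ : ℝ) (K : ℕ → Polynomial ℝ) : Prop :=
  (∀ i, (K i).natDegree = i) ∧ (∀ i, (K i).eval t₁ = 1) ∧
  (∀ i, (K i).eval t₀ = (-1 : ℝ) ^ i) ∧
  (∀ i j, (∫ t in t₀..t₁, (K i).eval t * (K j).eval t) =
    if i = j then (t₁ - t₀) / (2 * (i : ℝ) + 1) else 0)

/-- The lifting operator `L(z) = (z/k) ∑_{i=0}^r (-1)^i (2i+1) K_i`. -/
noncomputable def Lop (t₀ t₁ : ℝ) (r : ℕ) (K : ℕ → Polynomial ℝ) (z : ℝ) : Polynomial ℝ :=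
  Polynomial.C (z / (t₁ - t₀)) *
    ∑ i ∈ Finset.range (r + 1), Polynomial.C ((-1 : ℝ) ^ i * (2 * (i : ℝ) + 1)) * K i

/-- The endpoint lifting operator `L̂(z) = (z/k) ∑_{i=0}^r (2i+1) K_i`. -/
noncomputable def LopE (t₀ t₁ : ℝ) (r : ℕ) (K : ℕ → Polynomial ℝ) (z : ℝ) : Polynomial ℝ :=
  Polynomial.C (z / (t₁ - t₀)) *
    ∑ i ∈ Finset.range (r + 1), Polynomial.C (2 * (i : ℝ) + 1) * K i

/-- The scalar dG operator `Γ_λ(v) = v' + L(v(t₀)) + λ v`. -/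
noncomputable def Gam (t₀ t₁ : ℝ) (r : ℕ) (K : ℕ → Polynomial ℝ) (lam : ℝ)
    (v : Polynomial ℝ) : Polynomial ℝ :=
  Polynomial.derivative v + Lop t₀ t₁ r K (v.eval t₀) + Polynomial.C lam * v

/-- The dG error function `e(t) = exp(-λ (t - t₀)) - ψ(t)`. -/
noncomputable def errF (t₀ lam : ℝ) (ψ : Polynomial ℝ) (t : ℝ) : ℝ :=
  Real.exp (-lam * (t - t₀)) - ψ.eval t

/-- Integration of a polynomial over `[a, b]`, as a linear functional. -/
noncomputable def polyIntegral (a b : ℝ) : ℝ[X] →ₗ[ℝ] ℝ where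
  toFun p := ∫ t in a..b, p.eval t
  map_add' p q := by
    simp only [eval_add]
    exact integral_add (p.continuous.intervalIntegrable a b) (q.continuous.intervalIntegrable a b)
  map_smul' c p := by simp [eval_smul]

lemma polyIntegral_apply (a b : ℝ) (p : ℝ[X]) :
    polyIntegral a b p = ∫ t in a..b, p.eval t := rfl

lemma polyIntegral_C_mul (a b c : ℝ) (p : ℝ[X]) :
    polyIntegral a b (C c * p) = c * polyIntegral a b p := by
  rw [← smul_eq_C_mul, map_smul, smul_eq_mul]

lemma polyIntegral_derivative (a b : ℝ) (p : ℝ[X]) :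
    polyIntegral a b (derivative p) = p.eval b - p.eval a :=
  integral_eq_sub_of_hasDerivAt (fun x _ => p.hasDerivAt x)
    ((derivative p).continuous.intervalIntegrable a b)

lemma polyIntegral_derivative_mul (a b : ℝ) (p q : ℝ[X]) :
    polyIntegral a b (derivative p * q) =
      p.eval b * q.eval b - p.eval a * q.eval a - polyIntegral a b (p * derivative q) := by
  have h := polyIntegral_derivative a b (p * q)
  rw [derivative_mul, map_add, eval_mul, eval_mul] at h
  linarith

namespace IsLegendreBasis

variable {t₀ t₁ : ℝ} {K : ℕ → ℝ[X]}

lemma natDegree_eq (hK : IsLegendreBasis t₀ t₁ K) (i : ℕ) : (K i).natDegree = i := hK.1 i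

lemma eval_right (hK : IsLegendreBasis t₀ t₁ K) (i : ℕ) : (K i).eval t₁ = 1 := hK.2.1 i

lemma eval_left (hK : IsLegendreBasis t₀ t₁ K) (i : ℕ) : (K i).eval t₀ = (-1) ^ i := hK.2.2.1 i

lemma polyIntegral_mul (hK : IsLegendreBasis t₀ t₁ K) (i j : ℕ) :
    polyIntegral t₀ t₁ (K i * K j) = if i = j then (t₁ - t₀) / (2 * (i : ℝ) + 1) else 0 := by
  simp only [polyIntegral_apply, eval_mul]
  exact hK.2.2.2 i j

lemma coeff_ne_zero (hK : IsLegendreBasis t₀ t₁ K) (i : ℕ) : (K i).coeff i ≠ 0 := by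
  have h : K i ≠ 0 := by
    intro h
    simpa [h] using hK.eval_right i
  simpa [leadingCoeff, hK.natDegree_eq i] using leadingCoeff_ne_zero.mpr h

lemma zero_eq_one (hK : IsLegendreBasis t₀ t₁ K) : K 0 = 1 := by
  have h := eq_C_of_natDegree_eq_zero (hK.natDegree_eq 0)
  have h1 := hK.eval_right 0
  rw [h, eval_C] at h1
  rw [h, h1, C_1]

lemma exists_eq_sum (hK : IsLegendreBasis t₀ t₁ K) (n : ℕ) (p : ℝ[X]) (hp : p.natDegree < n) :
    ∃ c : ℕ → ℝ, p = ∑ i ∈ Finset.range n, C (c i) * K i := by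
  suffices h : ∀ n : ℕ, ∀ p : ℝ[X], p.degree < n →
      ∃ c : ℕ → ℝ, p = ∑ i ∈ Finset.range n, C (c i) * K i from
    h n p (degree_le_natDegree.trans_lt (by exact_mod_cast hp))
  clear hp p n
  intro n
  induction n with
  | zero =>
    intro p hp
    exact ⟨0, by simpa using hp⟩
  | succ n ih =>
    intro p hp
    set d := p.coeff n / (K n).coeff n
    have hq : (p - C d * K n).degree < n := by
      rw [degree_lt_iff_coeff_zero]
      intro m hm
      rw [coeff_sub, coeff_C_mul]
      rcases hm.eq_or_lt with rfl | hm
      · rw [div_mul_cancel₀ _ (hK.coeff_ne_zero n), sub_self]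
      · rw [(degree_lt_iff_coeff_zero _ _).mp hp m hm,
          coeff_eq_zero_of_natDegree_lt (by rwa [hK.natDegree_eq n])]
        ring
    obtain ⟨c, hc⟩ := ih _ hq
    refine ⟨fun i => if i = n then d else c i, ?_⟩
    simp only [Finset.sum_range_succ, if_true]
    rw [eq_comm, ← eq_sub_iff_add_eq, hc]
    refine Finset.sum_congr rfl fun i hi => ?_
    rw [if_neg (Finset.mem_range.mp hi).ne]

lemma polyIntegral_mul_eq_zero (hK : IsLegendreBasis t₀ t₁ K) {n : ℕ} {p : ℝ[X]}
    (hp : p.natDegree < n) : polyIntegral t₀ t₁ (K n * p) = 0 := by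
  obtain ⟨c, rfl⟩ := hK.exists_eq_sum n p hp
  rw [Finset.mul_sum, map_sum]
  refine Finset.sum_eq_zero fun i hi => ?_
  rw [mul_left_comm, polyIntegral_C_mul, hK.polyIntegral_mul,
    if_neg (Finset.mem_range.mp hi).ne', mul_zero]

lemma polyIntegral_sum_mul (hK : IsLegendreBasis t₀ t₁ K) (c : ℕ → ℝ) {n j : ℕ} (hj : j < n) :
    polyIntegral t₀ t₁ ((∑ i ∈ Finset.range n, C (c i) * K i) * K j) =
      c j * ((t₁ - t₀) / (2 * (j : ℝ) + 1)) := by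
  rw [Finset.sum_mul, map_sum, Finset.sum_eq_single_of_mem j (Finset.mem_range.mpr hj)]
  · rw [mul_assoc, polyIntegral_C_mul, hK.polyIntegral_mul, if_pos rfl]
  · intro i _ hij
    rw [mul_assoc, polyIntegral_C_mul, hK.polyIntegral_mul, if_neg hij, mul_zero]

/-- A polynomial of degree at most `n` that is orthogonal to `K 0, …, K (n - 1)` is a multiple of
`K n`. -/
lemma exists_eq_C_mul (hK : IsLegendreBasis t₀ t₁ K) (ht : t₀ < t₁) {n : ℕ} {p : ℝ[X]}
    (hp : p.natDegree ≤ n) (h : ∀ j < n, polyIntegral t₀ t₁ (p * K j) = 0) :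
    ∃ c : ℝ, p = C c * K n := by
  obtain ⟨c, rfl⟩ := hK.exists_eq_sum (n + 1) p (Nat.lt_succ_of_le hp)
  refine ⟨c n, ?_⟩
  rw [Finset.sum_range_succ, add_eq_right]
  refine Finset.sum_eq_zero fun j hj => ?_
  have hj := Finset.mem_range.mp hj
  have h1 := h j hj
  rw [hK.polyIntegral_sum_mul c (by lia)] at h1
  have h2 : (t₁ - t₀) / (2 * (j : ℝ) + 1) ≠ 0 := by
    have := sub_pos.mpr ht
    positivity
  rw [(mul_eq_zero.mp h1).resolve_right h2]
  simp

lemma natDegree_derivative_lt (hK : IsLegendreBasis t₀ t₁ K) {n : ℕ} (hn : n ≠ 0) :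
    (derivative (K n)).natDegree < n := by
  simpa only [hK.natDegree_eq n] using
    Polynomial.natDegree_derivative_lt (p := K n) (by rwa [hK.natDegree_eq n])

lemma polyIntegral_mul_derivative_of_le (hK : IsLegendreBasis t₀ t₁ K) {i j : ℕ} (h : j ≤ i) :
    polyIntegral t₀ t₁ (K i * derivative (K j)) = 0 := by
  rcases eq_or_ne j 0 with rfl | hj
  · simp [hK.zero_eq_one]
  · exact hK.polyIntegral_mul_eq_zero ((hK.natDegree_derivative_lt hj).trans_le h)

lemma polyIntegral_mul_derivative_of_lt (hK : IsLegendreBasis t₀ t₁ K) {i j : ℕ} (h : i < j) :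
    polyIntegral t₀ t₁ (K i * derivative (K j)) = 1 - (-1) ^ (i + j) := by
  rw [mul_comm, polyIntegral_derivative_mul, hK.polyIntegral_mul_derivative_of_le h.le,
    hK.eval_right, hK.eval_right, hK.eval_left, hK.eval_left, pow_add]
  ring

lemma polyIntegral_mul_derivative_add_two (hK : IsLegendreBasis t₀ t₁ K) (i j : ℕ) :
    polyIntegral t₀ t₁ (K i * derivative (K (j + 2))) =
      polyIntegral t₀ t₁ (K i * derivative (K j)) + if i = j + 1 then 2 else 0 := by
  rcases lt_trichotomy i (j + 1) with h | rfl | h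
  · rw [if_neg h.ne, hK.polyIntegral_mul_derivative_of_lt (by lia : i < j + 2)]
    rcases (Nat.lt_succ_iff.mp h).eq_or_lt with rfl | h
    · rw [hK.polyIntegral_mul_derivative_of_le le_rfl, ← add_assoc, ← two_mul]
      simp [pow_add, pow_mul]
    · rw [hK.polyIntegral_mul_derivative_of_lt h]
      ring
  · rw [if_pos rfl, hK.polyIntegral_mul_derivative_of_lt (by lia),
      hK.polyIntegral_mul_derivative_of_le (by lia),
      (by ring : j + 1 + (j + 2) = 2 * (j + 1) + 1), pow_succ, pow_mul]
    norm_num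
  · rw [if_neg h.ne', hK.polyIntegral_mul_derivative_of_le (by lia),
      hK.polyIntegral_mul_derivative_of_le (by lia), add_zero]

/-- The Legendre differential equation. -/
lemma derivative_mul_derivative (hK : IsLegendreBasis t₀ t₁ K) (ht : t₀ < t₁) (n : ℕ) :
    derivative ((X - C t₀) * (C t₁ - X) * derivative (K n)) = C (-((n : ℝ) * (n + 1))) * K n := by
  set W : ℝ[X] := (X - C t₀) * (C t₁ - X) with hW
  have hWdeg : W.natDegree ≤ 2 := by
    rw [hW]
    compute_degree
  have hW0 : W.eval t₀ = 0 := by simp [hW]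
  have hW1 : W.eval t₁ = 0 := by simp [hW]
  have hdeg : ∀ n, (derivative (W * derivative (K n))).natDegree ≤ n := by
    intro n
    rcases eq_or_ne n 0 with rfl | hn
    · simp [hK.zero_eq_one]
    · have h1 := hK.natDegree_derivative_lt hn
      have h2 := natDegree_derivative_le (W * derivative (K n))
      have h3 := natDegree_mul_le (p := W) (q := derivative (K n))
      lia
  obtain ⟨c, hc⟩ := hK.exists_eq_C_mul ht (hdeg n) (by
    intro j hj
    have h1 := polyIntegral_derivative_mul t₀ t₁ (W * derivative (K n)) (K j)
    have h2 := polyIntegral_derivative_mul t₀ t₁ (K n) (W * derivative (K j))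
    have h3 := hK.polyIntegral_mul_eq_zero ((hdeg j).trans_lt hj)
    rw [h3] at h2
    rw [h1]
    simp only [eval_mul, hW0, hW1] at h2 ⊢
    rw [(by ring : W * derivative (K n) * derivative (K j) =
      derivative (K n) * (W * derivative (K j))), h2]
    ring)
  rw [hc]
  congr 2
  rcases n with _ | m
  · have h := hc
    rw [hK.zero_eq_one] at h
    simpa using h.symm
  · have h1 := congrArg (fun p => coeff p (m + 1)) hc
    have h2 : (W * derivative (K (m + 1))).coeff (2 + m) =
        W.coeff 2 * (derivative (K (m + 1))).coeff m :=
      coeff_mul_add_eq_of_natDegree_le hWdeg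
        (Nat.lt_succ_iff.mp (hK.natDegree_derivative_lt (Nat.succ_ne_zero m)))
    have h3 : W.coeff 2 = -1 := by
      rw [hW]
      compute_degree!
    simp only [coeff_C_mul] at h1
    rw [coeff_derivative, (by ring : m + 1 + 1 = 2 + m), h2, h3, coeff_derivative] at h1
    apply mul_right_cancel₀ (hK.coeff_ne_zero (m + 1))
    rw [← h1]
    push_cast
    ring

lemma abs_eval_le_one (hK : IsLegendreBasis t₀ t₁ K) (ht : t₀ < t₁) (n : ℕ) {t : ℝ}
    (h0 : t₀ ≤ t) (h1 : t ≤ t₁) : |(K n).eval t| ≤ 1 := by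
  rcases eq_or_ne n 0 with rfl | hn
  · simp [hK.zero_eq_one]
  set N : ℝ := (n : ℝ) * (n + 1) with hN
  have hNpos : 0 < N := by positivity
  set W : ℝ[X] := (X - C t₀) * (C t₁ - X) with hW
  -- Sonin's function, which is monotone on either side of the midpoint
  set F : ℝ[X] := K n ^ 2 + C N⁻¹ * (W * derivative (K n) ^ 2) with hF
  have hWeval : ∀ x, W.eval x = (x - t₀) * (t₁ - x) := by intro x; simp [hW]
  have hF' : ∀ x, (derivative F).eval x =
      (2 * x - (t₀ + t₁)) * (N⁻¹ * (derivative (K n)).eval x ^ 2) := by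
    intro x
    have hode := congrArg (eval x) (hK.derivative_mul_derivative ht n)
    simp only [derivative_mul, derivative_sub, derivative_X, derivative_C, eval_add, eval_mul,
      eval_sub, eval_X, eval_C, eval_one, eval_zero] at hode
    rw [← hN] at hode
    simp only [hF, hW, derivative_add, derivative_mul, derivative_sub, derivative_X, derivative_C,
      derivative_pow, eval_add, eval_mul, eval_sub, eval_X, eval_C, eval_one, eval_zero, eval_pow]
    field_simp
    push_cast
    linear_combination 2 * (derivative (K n)).eval x * hode
  have hsq : ∀ x, 0 ≤ N⁻¹ * (derivative (K n)).eval x ^ 2 := fun x => by positivity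
  have hF0 : F.eval t₀ = 1 := by
    simp [hF, hWeval, hK.eval_left, ← pow_mul, mul_comm n 2]
  have hF1 : F.eval t₁ = 1 := by simp [hF, hWeval, hK.eval_right]
  have hle : F.eval t ≤ 1 := by
    rcases le_total t ((t₀ + t₁) / 2) with h | h
    · rw [← hF0]
      refine antitoneOn_of_deriv_nonpos (convex_Icc t₀ ((t₀ + t₁) / 2)) F.continuousOn
        F.differentiable.differentiableOn (fun x hx => ?_) ⟨le_rfl, h0.trans h⟩ ⟨h0, h⟩ h0
      rw [interior_Icc] at hx
      rw [Polynomial.deriv, hF']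
      exact mul_nonpos_of_nonpos_of_nonneg (by linarith [hx.2]) (hsq x)
    · rw [← hF1]
      refine monotoneOn_of_deriv_nonneg (convex_Icc ((t₀ + t₁) / 2) t₁) F.continuousOn
        F.differentiable.differentiableOn (fun x hx => ?_) ⟨h, h1⟩ ⟨h.trans h1, le_rfl⟩ h1
      rw [interior_Icc] at hx
      rw [Polynomial.deriv, hF']
      exact mul_nonneg (by linarith [hx.1]) (hsq x)
  have hFt : F.eval t =
      (K n).eval t ^ 2 + (t - t₀) * (t₁ - t) * (N⁻¹ * (derivative (K n)).eval t ^ 2) := by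
    simp only [hF, eval_add, eval_mul, eval_pow, eval_C, hWeval]
    ring
  have hrest := mul_nonneg (mul_nonneg (sub_nonneg.mpr h0) (sub_nonneg.mpr h1)) (hsq t)
  rw [← sq_le_one_iff_abs_le_one]
  linarith

end IsLegendreBasis

/-- Up to sign and normalization, the Legendre coefficients of the polynomial `V` for which
`∫ w V` is proportional to `v(t₀)` whenever `Γ_λ(v) = w`; here `m = λ (t₁ - t₀)`. -/
noncomputable def dualCoeff (m : ℝ) : ℕ → ℝ
  | 0 => 1
  | 1 => 1 + 2 / m
  | j + 2 => dualCoeff m j + 2 * (2 * (j : ℝ) + 3) / m * dualCoeff m (j + 1)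

lemma dualCoeff_pos {m : ℝ} (hm : 0 < m) : ∀ j, 0 < dualCoeff m j
  | 0 => by simp [dualCoeff]
  | 1 => by rw [dualCoeff]; positivity
  | j + 2 => by
    have h0 := dualCoeff_pos hm j
    have h1 := dualCoeff_pos hm (j + 1)
    rw [dualCoeff]
    positivity

/-- The polynomial `V` for which `∫ w V` is proportional to `v(t₀)` whenever `Γ_λ(v) = w`. -/
noncomputable def dualPoly (K : ℕ → ℝ[X]) (m : ℝ) (r : ℕ) : ℝ[X] :=
  ∑ i ∈ Finset.range (r + 1), C ((-1) ^ i * (2 * (i : ℝ) + 1) * dualCoeff m i) * K i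

lemma Lop_eq_C_mul (t₀ t₁ : ℝ) (r : ℕ) (K : ℕ → ℝ[X]) (z : ℝ) :
    Lop t₀ t₁ r K z = C z * Lop t₀ t₁ r K 1 := by
  rw [Lop, Lop, ← mul_assoc, ← C_mul, mul_one_div]

namespace IsLegendreBasis

variable {t₀ t₁ : ℝ} {K : ℕ → ℝ[X]}

lemma polyIntegral_Lop_mul (hK : IsLegendreBasis t₀ t₁ K) (ht : t₀ < t₁) {r : ℕ} (z : ℝ)
    {p : ℝ[X]} (hp : p.natDegree ≤ r) :
    polyIntegral t₀ t₁ (Lop t₀ t₁ r K z * p) = z * p.eval t₀ := by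
  obtain ⟨c, rfl⟩ := hK.exists_eq_sum (r + 1) p (Nat.lt_succ_of_le hp)
  rw [Finset.mul_sum, map_sum, eval_finsetSum, Finset.mul_sum]
  refine Finset.sum_congr rfl fun j hj => ?_
  rw [mul_left_comm, polyIntegral_C_mul, Lop, mul_assoc, polyIntegral_C_mul,
    hK.polyIntegral_sum_mul _ (Finset.mem_range.mp hj), eval_mul, eval_C, hK.eval_left]
  have := (sub_pos.mpr ht).ne'
  field_simp

lemma eval_left_dualPoly (hK : IsLegendreBasis t₀ t₁ K) (m : ℝ) (r : ℕ) :
    (dualPoly K m r).eval t₀ =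
      ∑ i ∈ Finset.range (r + 1), (2 * (i : ℝ) + 1) * dualCoeff m i := by
  rw [dualPoly, eval_finsetSum]
  refine Finset.sum_congr rfl fun i _ => ?_
  rw [eval_mul, eval_C, hK.eval_left]
  have : ((-1 : ℝ) ^ i) * (-1) ^ i = 1 := by rw [← mul_pow]; simp
  linear_combination (2 * (i : ℝ) + 1) * dualCoeff m i * this

lemma abs_eval_dualPoly_le (hK : IsLegendreBasis t₀ t₁ K) (ht : t₀ < t₁) {m : ℝ} (hm : 0 < m)
    (r : ℕ) {t : ℝ} (h0 : t₀ ≤ t) (h1 : t ≤ t₁) :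
    |(dualPoly K m r).eval t| ≤ (dualPoly K m r).eval t₀ := by
  rw [hK.eval_left_dualPoly, dualPoly, eval_finsetSum]
  refine (Finset.abs_sum_le_sum_abs _ _).trans (Finset.sum_le_sum fun i _ => ?_)
  have hc := dualCoeff_pos hm i
  have hi : (0 : ℝ) ≤ (2 * (i : ℝ) + 1) * dualCoeff m i := by positivity
  rw [eval_mul, eval_C, abs_mul, mul_assoc, abs_mul, abs_pow, abs_neg, abs_one, one_pow, one_mul,
    abs_of_nonneg hi]
  exact mul_le_of_le_one_right hi (hK.abs_eval_le_one ht i h0 h1)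

lemma natDegree_dualPoly_le (hK : IsLegendreBasis t₀ t₁ K) (m : ℝ) (r : ℕ) :
    (dualPoly K m r).natDegree ≤ r := by
  refine natDegree_sum_le_of_forall_le _ _ fun i hi => ?_
  refine (natDegree_C_mul_le _ _).trans ?_
  rw [hK.natDegree_eq]
  exact Nat.lt_succ_iff.mp (Finset.mem_range.mp hi)

lemma polyIntegral_dualPoly_mul (hK : IsLegendreBasis t₀ t₁ K) (m : ℝ) {r j : ℕ} (hj : j ≤ r) :
    polyIntegral t₀ t₁ (dualPoly K m r * K j) = (-1) ^ j * dualCoeff m j * (t₁ - t₀) := by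
  rw [dualPoly, hK.polyIntegral_sum_mul _ (Nat.lt_succ_of_le hj)]
  field_simp

lemma polyIntegral_dualPoly_mul_derivative (hK : IsLegendreBasis t₀ t₁ K) {m : ℝ} (hm : 0 < m)
    (r : ℕ) : ∀ j ≤ r, polyIntegral t₀ t₁ (dualPoly K m r * derivative (K j)) =
      (-1) ^ j * m * (1 - dualCoeff m j)
  | 0, _ => by simp [hK.zero_eq_one, dualCoeff]
  | 1, _ => by
    rw [dualPoly, Finset.sum_mul, map_sum, Finset.sum_eq_single_of_mem 0 (by simp)]
    · rw [mul_assoc, polyIntegral_C_mul, hK.polyIntegral_mul_derivative_of_lt zero_lt_one]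
      simp only [dualCoeff]
      field_simp
      norm_num
    · intro i _ hi
      rw [mul_assoc, polyIntegral_C_mul, hK.polyIntegral_mul_derivative_of_le (by lia), mul_zero]
  | j + 2, hj => by
    have ih := polyIntegral_dualPoly_mul_derivative hK hm r j (by lia)
    rw [dualPoly, Finset.sum_mul, map_sum] at ih ⊢
    simp only [mul_assoc, polyIntegral_C_mul] at ih ⊢
    simp only [hK.polyIntegral_mul_derivative_add_two, mul_add, Finset.sum_add_distrib] at ih ⊢
    rw [ih, Finset.sum_eq_single_of_mem (j + 1) (Finset.mem_range.mpr (by lia))]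
    · rw [if_pos rfl, dualCoeff]
      push_cast
      field_simp
      ring
    · intro i _ hi
      simp [if_neg hi]

/-- The polynomial `dualPoly` represents evaluation at `t₀` through `Γ_λ`. -/
lemma polyIntegral_Gam_mul_dualPoly (hK : IsLegendreBasis t₀ t₁ K) (ht : t₀ < t₁) {lam : ℝ}
    (hlam : 0 < lam) {r : ℕ} {v : ℝ[X]} (hv : v.natDegree ≤ r) :
    polyIntegral t₀ t₁ (Gam t₀ t₁ r K lam v * dualPoly K (lam * (t₁ - t₀)) r) =
      ((dualPoly K (lam * (t₁ - t₀)) r).eval t₀ + lam * (t₁ - t₀)) * v.eval t₀ := by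
  set m := lam * (t₁ - t₀) with hm_def
  have hm : 0 < m := mul_pos hlam (sub_pos.mpr ht)
  rw [Gam, add_mul, add_mul, map_add, map_add,
    hK.polyIntegral_Lop_mul ht _ (hK.natDegree_dualPoly_le m r), mul_assoc, polyIntegral_C_mul]
  suffices h : polyIntegral t₀ t₁ (dualPoly K m r * derivative v) +
      lam * polyIntegral t₀ t₁ (dualPoly K m r * v) = m * v.eval t₀ by
    rw [mul_comm (derivative v), mul_comm v]
    linarith
  obtain ⟨c, rfl⟩ := hK.exists_eq_sum (r + 1) v (Nat.lt_succ_of_le hv)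
  rw [derivative_sum, Finset.mul_sum, Finset.mul_sum, map_sum, map_sum, Finset.mul_sum,
    ← Finset.sum_add_distrib, eval_finsetSum, Finset.mul_sum]
  refine Finset.sum_congr rfl fun j hj => ?_
  have hj := Nat.lt_succ_iff.mp (Finset.mem_range.mp hj)
  rw [derivative_C_mul, mul_left_comm, polyIntegral_C_mul, mul_left_comm, polyIntegral_C_mul,
    hK.polyIntegral_dualPoly_mul_derivative hm r j hj, hK.polyIntegral_dualPoly_mul m hj, eval_mul,
    eval_C, hK.eval_left, hm_def]
  ring

lemma abs_eval_left_le (hK : IsLegendreBasis t₀ t₁ K) (ht : t₀ < t₁) {lam : ℝ}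
    (hlam : 0 < lam) {r : ℕ} {v : ℝ[X]} (hv : v.natDegree ≤ r) :
    |v.eval t₀| ≤ ∫ s in t₀..t₁, |(Gam t₀ t₁ r K lam v).eval s| := by
  have hdual := hK.polyIntegral_Gam_mul_dualPoly ht hlam hv
  set w := Gam t₀ t₁ r K lam v
  set m := lam * (t₁ - t₀)
  have hm : 0 < m := mul_pos hlam (sub_pos.mpr ht)
  set V := dualPoly K m r with hV
  have hV0 : 0 ≤ V.eval t₀ :=
    (abs_nonneg _).trans (hK.abs_eval_dualPoly_le ht hm r le_rfl ht.le)
  have hw0 : 0 ≤ ∫ s in t₀..t₁, |w.eval s| :=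
    integral_nonneg ht.le fun s _ => abs_nonneg _
  have hbound : |polyIntegral t₀ t₁ (w * V)| ≤ V.eval t₀ * ∫ s in t₀..t₁, |w.eval s| := by
    rw [polyIntegral_apply, ← intervalIntegral.integral_const_mul]
    refine (abs_integral_le_integral_abs ht.le).trans (integral_mono_on ht.le
      ((w * V).continuous.abs.intervalIntegrable _ _)
      ((w.continuous.abs.const_mul _).intervalIntegrable _ _) fun s hs => ?_)
    rw [eval_mul, abs_mul, mul_comm]
    exact mul_le_mul_of_nonneg_right (hK.abs_eval_dualPoly_le ht hm r hs.1 hs.2) (abs_nonneg _)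
  rw [hdual, abs_mul, abs_of_pos (by positivity)] at hbound
  refine le_of_mul_le_mul_left (hbound.trans ?_) (by positivity : 0 < V.eval t₀ + m)
  exact mul_le_mul_of_nonneg_right (by linarith) hw0

end IsLegendreBasis

lemma eq_zero_of_derivative_add_C_mul_eq_zero {lam : ℝ} (hlam : lam ≠ 0) {p : ℝ[X]}
    (h : derivative p + C lam * p = 0) : p = 0 := by
  by_contra hp
  have h1 := degree_derivative_lt hp
  rw [eq_neg_of_add_eq_zero_left h, degree_neg, degree_C_mul hlam] at h1
  exact lt_irrefl _ h1

lemma errF_left_ne_zero {t₀ t₁ lam : ℝ} {r : ℕ} {K : ℕ → ℝ[X]} (hlam : 0 < lam) {ψ : ℝ[X]}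
    (hψ : Gam t₀ t₁ r K lam ψ = Lop t₀ t₁ r K 1) : errF t₀ lam ψ t₀ ≠ 0 := by
  intro h
  have h1 : ψ.eval t₀ = 1 := by
    simp only [errF, sub_self, mul_zero, Real.exp_zero] at h
    linarith
  rw [Gam, h1] at hψ
  have h2 : ψ = 0 := eq_zero_of_derivative_add_C_mul_eq_zero hlam.ne' (by linear_combination hψ)
  simp [h2] at h1

lemma continuous_errF (t₀ lam : ℝ) (ψ : ℝ[X]) : Continuous (errF t₀ lam ψ) := by
  unfold errF
  fun_prop

/-- Variation of constants, with the normalized dG error as the homogeneous part. -/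
lemma exp_mul_sub_errF_eq_integral {t₀ t₁ lam : ℝ} {r : ℕ} {K : ℕ → ℝ[X]} (hlam : 0 < lam)
    {ψ : ℝ[X]} (hψ : Gam t₀ t₁ r K lam ψ = Lop t₀ t₁ r K 1) (v : ℝ[X]) (t : ℝ) :
    Real.exp (lam * t) *
        (v.eval t - v.eval t₀ * (errF t₀ lam ψ t / errF t₀ lam ψ t₀)) =
      ∫ s in t₀..t, Real.exp (lam * s) * (Gam t₀ t₁ r K lam v).eval s := by
  have he := errF_left_ne_zero hlam hψ
  set δ := Lop t₀ t₁ r K 1 with hδ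
  have he0 : errF t₀ lam ψ t₀ = 1 - ψ.eval t₀ := by simp [errF]
  have hderiv : ∀ s, HasDerivAt (fun s => Real.exp (lam * s) *
      (v.eval s - v.eval t₀ * (errF t₀ lam ψ s / errF t₀ lam ψ t₀)))
      (Real.exp (lam * s) * (Gam t₀ t₁ r K lam v).eval s) s := by
    intro s
    have hexp : HasDerivAt (fun s => Real.exp (lam * s)) (Real.exp (lam * s) * lam) s := by
      simpa using ((hasDerivAt_id s).const_mul lam).exp
    have herr : HasDerivAt (errF t₀ lam ψ)
        (Real.exp (-lam * (s - t₀)) * -lam - (derivative ψ).eval s) s := by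
      have h := (((hasDerivAt_id s).sub_const t₀).const_mul (-lam)).exp
      rw [mul_one] at h
      exact h.sub (ψ.hasDerivAt s)
    have hψs := congrArg (eval s) hψ
    rw [Gam, Lop_eq_C_mul, ← hδ] at hψs
    simp only [eval_add, eval_mul, eval_C] at hψs
    refine (hexp.mul ((v.hasDerivAt s).sub
      ((herr.div_const _).const_mul (v.eval t₀)))).congr_deriv ?_
    rw [Gam, Lop_eq_C_mul, ← hδ]
    simp only [Pi.sub_apply, eval_add, eval_mul, eval_C]
    have hes : errF t₀ lam ψ s = Real.exp (-lam * (s - t₀)) - ψ.eval s := rfl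
    have key : (Real.exp (-lam * (s - t₀)) * -lam - (derivative ψ).eval s) +
        lam * errF t₀ lam ψ s = -errF t₀ lam ψ t₀ * δ.eval s := by
      rw [hes, he0]
      linear_combination -hψs
    rw [neg_mul lam] at key ⊢
    field_simp
    linear_combination -v.eval t₀ * key
  have hcont : Continuous fun s => Real.exp (lam * s) * (Gam t₀ t₁ r K lam v).eval s := by
    fun_prop
  rw [integral_eq_sub_of_hasDerivAt (fun s _ => hderiv s) (hcont.intervalIntegrable _ _),
    div_self he]
  ring

lemma le_biSup_abs_of_continuous {f : ℝ → ℝ} (hf : Continuous f) {a b t : ℝ}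
    (ht : t ∈ Set.Ioc a b) : |f t| ≤ ⨆ s ∈ Set.Ioc a b, |f s| := by
  obtain ⟨M, hM⟩ := isCompact_Icc.bddAbove_image (hf.abs.continuousOn (s := Set.Icc a b))
  have hM' : ∀ s ∈ Set.Ioc a b, |f s| ≤ M := fun s hs =>
    hM (Set.mem_image_of_mem _ (Set.Ioc_subset_Icc_self hs))
  have hbdd : BddAbove (Set.range fun s => ⨆ _ : s ∈ Set.Ioc a b, |f s|) := by
    refine ⟨M, ?_⟩
    rintro _ ⟨s, rfl⟩
    exact Real.iSup_le (hM' s) ((abs_nonneg _).trans (hM' t ht))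
  refine le_trans (le_of_eq ?_) (le_ciSup hbdd t)
  rw [ciSup_pos ht]

lemma abs_sub_errF_le {t₀ t₁ lam : ℝ} {r : ℕ} {K : ℕ → ℝ[X]} (hlam : 0 < lam)
    {ψ : ℝ[X]} (hψ : Gam t₀ t₁ r K lam ψ = Lop t₀ t₁ r K 1) (v : ℝ[X]) {t : ℝ}
    (ht : t ∈ Set.Ioc t₀ t₁) :
    |v.eval t - v.eval t₀ * (errF t₀ lam ψ t / errF t₀ lam ψ t₀)| ≤
      ∫ s in t₀..t₁, |(Gam t₀ t₁ r K lam v).eval s| := by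
  have h := exp_mul_sub_errF_eq_integral hlam hψ v t
  set w := Gam t₀ t₁ r K lam v
  have hcont : Continuous fun s => |Real.exp (lam * s) * w.eval s| := by fun_prop
  have hle : |∫ s in t₀..t, Real.exp (lam * s) * w.eval s| ≤
      Real.exp (lam * t) * ∫ s in t₀..t, |w.eval s| := by
    rw [← intervalIntegral.integral_const_mul]
    refine (abs_integral_le_integral_abs ht.1.le).trans (integral_mono_on ht.1.le
      (hcont.intervalIntegrable _ _)
      ((w.continuous.abs.const_mul _).intervalIntegrable _ _) fun s hs => ?_)
    rw [abs_mul, Real.abs_exp]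
    exact mul_le_mul_of_nonneg_right
      (Real.exp_le_exp.mpr (mul_le_mul_of_nonneg_left hs.2 hlam.le)) (abs_nonneg _)
  rw [← h, abs_mul, Real.abs_exp] at hle
  refine (le_of_mul_le_mul_left hle (Real.exp_pos _)).trans ?_
  exact integral_mono_interval le_rfl ht.1.le ht.2
    (Filter.Eventually.of_forall fun s => abs_nonneg _)
    (w.continuous.abs.intervalIntegrable _ _)

/-- `L^∞`–`L¹` stability of `(Γ_λ)⁻¹`:
`sup_I |v| ≤ (sup_I |e/e(t₀)| + 1) ‖w‖_{L¹(I)}` whenever `Γ_λ(v) = w`. -/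
theorem stmt_14 (t₀ t₁ : ℝ) (ht : t₀ < t₁) (r : ℕ) (K : ℕ → Polynomial ℝ)
    (hK : IsLegendreBasis t₀ t₁ K) (lam : ℝ) (hlam : 0 < lam)
    (ψ : Polynomial ℝ) (hψdeg : ψ.natDegree ≤ r)
    (hψ : Gam t₀ t₁ r K lam ψ = Lop t₀ t₁ r K 1) :
    ∀ w v : Polynomial ℝ, w.natDegree ≤ r → v.natDegree ≤ r →
      Gam t₀ t₁ r K lam v = w →
      ∀ t ∈ Set.Ioc t₀ t₁,
        |v.eval t| ≤ ((⨆ s ∈ Set.Ioc t₀ t₁, |errF t₀ lam ψ s / errF t₀ lam ψ t₀|) + 1) *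
          ∫ s in t₀..t₁, |w.eval s| := by
  rintro w v - hv rfl t hti
  have hv0 := hK.abs_eval_left_le ht hlam hv
  have hvt := abs_sub_errF_le hlam hψ v hti
  have hsup := le_biSup_abs_of_continuous
    ((continuous_errF t₀ lam ψ).div_const (errF t₀ lam ψ t₀)) hti
  set I := ∫ s in t₀..t₁, |(Gam t₀ t₁ r K lam v).eval s|
  set ε := errF t₀ lam ψ t / errF t₀ lam ψ t₀
  calc |v.eval t| = |v.eval t₀ * ε + (v.eval t - v.eval t₀ * ε)| := by rw [add_sub_cancel]
    _ ≤ |v.eval t₀| * |ε| + |v.eval t - v.eval t₀ * ε| := by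
      rw [← abs_mul]
      exact abs_add_le _ _
    _ ≤ I * |ε| + I := by gcongr
    _ = (|ε| + 1) * I := by ring
    _ ≤ _ := mul_le_mul_of_nonneg_right (by linarith) ((abs_nonneg _).trans hv0)
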